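/- For every k ∈ ℕ and every ε > 0 there exists C ∈ ℕ such that for every d ∈ ℕ, every (ε,C)-rich graph G on {0,1}^d contains an ordered copy of H_k. Consequently, ρ_<(H_k) = 0 for every k. -/

import Mathlib

/-!
Why rich graphs contain `H_k`. The proof is an induction on `k`, for an arbitrary relation `r` on
the cube. Encode the edges of level `i + 1` by pairs `(u, w)` (`hits`), where `w` supplies the
coordinates of the right endpoint `splice i w u` above `i`; then every level has the same
normalisation. Delete from each level the edges whose right endpoint has no left neighbour at a
deeper level. A deleted edge determines its level from its right endpoint, so the densities deleted
add up to at most a constant (`sum_card_hits_lost`), and most rich levels stay rich. For fixed `i`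
and `w`, the vertex `splice i w u` depends only on the first `i` coordinates of `u`; the relation
`link r i w` consists of the edges in the left half of such a node whose left endpoint is joined to
that vertex `z`. By Cauchy–Schwarz some link has linear total density over the rich levels
(`exists_link`), hence many rich levels, hence a copy of `H_{k-1}`. The vertex `z` is adjacent to all
of its left vertices and, as the edges to `z` survived the deletion, `z` has a left neighbour at a
deeper level, which lies to the right of the copy. Adding that neighbour and `z` gives `H_k`
(`hasH_succ_of_link`).

Why the relative Turán density vanishes. Give a pair at level `ℓ` of the complete graph on the cube
the weight `2 ^ ℓ`, so that all levels are equally heavy. An `H_k`-free graph has boundedly many rich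
levels, so its proportion of the total weight tends to `0` with the dimension. It remains to replace
the weighted complete graph by an unweighted graph (`relTuranDensity_le_of_weight`). Every vertex `x`
is replaced by copies labelled by functions `a : V → A`, where `A` is a finite abelian group, and the
copies labelled `a` of `x` and `b` of `y`, for `x < y`, are joined if `a y - b x` lies in a set
`S x y` whose size is the weight of `xy`. Translations of the labels act transitively on the edges
between the copies of `x` and those of `y`, so a uniformly random clique that picks one copy of each
vertex contains each such edge with the same probability, inversely proportional to the weight of
`xy`. Pulling an `F`-free subgraph back along the clique gives an `F`-free graph on `V` whose expected
weight is proportional to the number of edges of the subgraph. Here it matters that `H_k` has no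
isolated vertices: a copy of it in the host graph using only edges of the subgraph is then a copy in
the subgraph.
-/

open scoped Classical

/-- `G` contains an ordered copy of `F`: a strictly order-preserving map
sending edges to edges. -/
def ContainsOrderedCopy {α β : Type*} [Preorder α] [Preorder β]
    (F : SimpleGraph α) (G : SimpleGraph β) : Prop :=
  ∃ φ : α → β, StrictMono φ ∧ ∀ u v, F.Adj u v → G.Adj (φ u) (φ v)

/-- The number of edges of a simple graph. -/
noncomputable def edgeCount {α : Type*} (G : SimpleGraph α) : ℕ := G.edgeSet.ncard

/-- `ρ_<(F, G)`: the largest edge-density of an `F`-free (ordered) subgraph of `G`. -/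
noncomputable def relTuranDensityIn {α β : Type*} [Preorder α] [Preorder β]
    (F : SimpleGraph α) (G : SimpleGraph β) : ℝ :=
  sSup {r : ℝ | ∃ G' : G.Subgraph, ¬ ContainsOrderedCopy F G'.coe ∧
    r = (edgeCount G'.coe : ℝ) / (edgeCount G : ℝ)}

/-- `ρ_<(F)`: the relative Turán density of an ordered graph `F`, the infimum of
`ρ_<(F, G)` over all finite ordered graphs `G` with at least one edge. -/
noncomputable def relTuranDensity {α : Type*} [Preorder α] (F : SimpleGraph α) : ℝ :=
  sInf {r : ℝ | ∃ (n : ℕ) (G : SimpleGraph (Fin n)),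
    1 ≤ edgeCount G ∧ r = relTuranDensityIn F G}

/-- The cube `{0,1}^d`, ordered lexicographically (index `0` most significant). -/
abbrev Cube (d : ℕ) := Lex (Fin d → Bool)

noncomputable instance (priority := 2000) (d : ℕ) : LinearOrder (Cube d) :=
  haveI : WellFoundedLT (Fin d) := inferInstance
  inferInstance

instance instFintypeLexSelf {α : Type*} [Fintype α] : Fintype (Lex α) := ‹Fintype α›

/-- `δ(x, y) = ℓ`, with positions `1`-indexed: the least (1-indexed) coordinate at which
`x` and `y` differ is `ℓ`. -/
def atLevel {d : ℕ} (ℓ : ℕ) (x y : Cube d) : Prop :=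
  ∃ i : Fin d, (i : ℕ) + 1 = ℓ ∧ ofLex x i ≠ ofLex y i ∧ ∀ j < i, ofLex x j = ofLex y j

/-- `e_ℓ(G)`: the number of level-`ℓ` edges of a graph `G` on `{0,1}^d`. -/
noncomputable def levelCount {d : ℕ} (G : SimpleGraph (Cube d)) (ℓ : ℕ) : ℕ :=
  {p : Cube d × Cube d | p.1 < p.2 ∧ G.Adj p.1 p.2 ∧ atLevel ℓ p.1 p.2}.ncard

/-- `τ_{ℓ,d} = 2 ^ (2d - ℓ - 1)`. -/
def tau (d ℓ : ℕ) : ℕ := 2 ^ (2 * d - ℓ - 1)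

/-- The level `ℓ` is `α`-rich with respect to `G`, i.e. `e_ℓ(G) ≥ α · τ_{ℓ,d}`. -/
def IsRichLevel {d : ℕ} (G : SimpleGraph (Cube d)) (α : ℝ) (ℓ : ℕ) : Prop :=
  α * (tau d ℓ : ℝ) ≤ (levelCount G ℓ : ℝ)

/-- `G` is `(α, C)`-rich: at least `C` levels `ℓ ∈ [d]` are `α`-rich. -/
def IsRichGraph {d : ℕ} (G : SimpleGraph (Cube d)) (α C : ℝ) : Prop :=
  C ≤ ({ℓ : ℕ | ℓ ∈ Finset.Icc 1 d ∧ IsRichLevel G α ℓ}.ncard : ℝ)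

/-- The vertex set `{0,1}^d × [m]`, ordered lexicographically. -/
abbrev BlockVert (d m : ℕ) := Lex (Cube d × Fin m)

/-- `e_ℓ(R)` for a graph `R` on `{0,1}^d × [m]`: the number of edges whose endpoints lie in
blocks `B_x`, `B_y` with `δ(x,y) = ℓ`. -/
noncomputable def levelCountB {d m : ℕ} (R : SimpleGraph (BlockVert d m)) (ℓ : ℕ) : ℕ :=
  {p : BlockVert d m × BlockVert d m |
    p.1 < p.2 ∧ R.Adj p.1 p.2 ∧ atLevel ℓ (ofLex p.1).1 (ofLex p.2).1}.ncard

/-- Property (i) with accuracy `ε`: every level `ℓ ∈ [d]` has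
`(1−ε)·2^(d−1)·m² ≤ e_ℓ(R) ≤ (1+ε)·2^(d−1)·m²`. -/
def PropI {d m : ℕ} (R : SimpleGraph (BlockVert d m)) (ε : ℝ) : Prop :=
  ∀ ℓ ∈ Finset.Icc 1 d,
    (1 - ε) * 2 ^ (d - 1) * (m : ℝ) ^ 2 ≤ (levelCountB R ℓ : ℝ) ∧
    (levelCountB R ℓ : ℝ) ≤ (1 + ε) * 2 ^ (d - 1) * (m : ℝ) ^ 2

/-- Property (ii) with accuracy `ε`: for all distinct `x, y ∈ {0,1}^d` (say `δ(x,y) = ℓ`) and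
all `P ⊆ B_x`, `Q ⊆ B_y` of size at least `m^(2/3)`, the number of edges of `R` between `P`
and `Q` is at most `(1+ε)·2^(−d+ℓ)·|P|·|Q|`. -/
def PropII {d m : ℕ} (R : SimpleGraph (BlockVert d m)) (ε : ℝ) : Prop :=
  ∀ (x y : Cube d) (ℓ : ℕ), atLevel ℓ x y →
    ∀ P Q : Finset (Fin m),
      (m : ℝ) ^ ((2 : ℝ)/3) ≤ (P.card : ℝ) → (m : ℝ) ^ ((2 : ℝ)/3) ≤ (Q.card : ℝ) →
      ({pq : Fin m × Fin m | pq.1 ∈ P ∧ pq.2 ∈ Q ∧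
          R.Adj (toLex (x, pq.1)) (toLex (y, pq.2))}.ncard : ℝ) ≤
        (1 + ε) * 2 ^ ((ℓ : ℤ) - (d : ℤ)) * (P.card : ℝ) * (Q.card : ℝ)

/-- `F` contains a monotone path of length two: vertices `u < v < w` with
`uv, vw ∈ E(F)`. -/
def HasMonotonePathTwo {α : Type*} [Preorder α] (F : SimpleGraph α) : Prop :=
  ∃ u v w, u < v ∧ v < w ∧ F.Adj u v ∧ F.Adj v w

/-- The ordered graph `H_k` on `[k] × {0,1}` (ordered lexicographically), with edges
`(x,0)(y,1)` for `x ≤ y`. -/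
def Hgraph (k : ℕ) : SimpleGraph (Lex (Fin k × Bool)) :=
  SimpleGraph.fromRel (fun a b =>
    (ofLex a).2 = false ∧ (ofLex b).2 = true ∧ (ofLex a).1 ≤ (ofLex b).1)

/-! ### Levels of the cube and counting of edges by level -/

theorem Cube.ext_coord {d : ℕ} {x y : Cube d} (h : ∀ j, ofLex x j = ofLex y j) : x = y :=
  ofLex.injective (funext h)

theorem card_cube (d : ℕ) : Fintype.card (Cube d) = 2 ^ d := by
  simp [Cube]

/-- The vertex that agrees with `u` below coordinate `i`, is `true` at `i`, and agrees with `w`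
above `i`. When `u` is `false` at `i` and `w` ranges over the cube, it ranges over the possible
right endpoints of level-`(i+1)` edges with left endpoint `u`, each being hit `2 ^ (i + 1)` times. -/
def splice {d : ℕ} (i : Fin d) (w u : Cube d) : Cube d :=
  toLex fun j => if j < i then ofLex u j else if j = i then true else ofLex w j

theorem splice_below {d : ℕ} {i j : Fin d} (w u : Cube d) (h : j < i) :
    ofLex (splice i w u) j = ofLex u j := if_pos h

theorem splice_at {d : ℕ} (i : Fin d) (w u : Cube d) : ofLex (splice i w u) i = true :=
  (if_neg (lt_irrefl i)).trans (if_pos rfl)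

theorem splice_above {d : ℕ} {i j : Fin d} (w u : Cube d) (h : i < j) :
    ofLex (splice i w u) j = ofLex w j :=
  (if_neg h.not_gt).trans (if_neg h.ne')

theorem cube_lt {d : ℕ} {x y : Cube d} (i : Fin d) (h : ∀ j < i, ofLex x j = ofLex y j)
    (hx : ofLex x i = false) (hy : ofLex y i = true) : x < y :=
  ⟨i, h, show ofLex x i < ofLex y i by rw [hx, hy]; decide⟩

theorem lt_splice {d : ℕ} (i : Fin d) (w u : Cube d) (h : ofLex u i = false) :
    u < splice i w u :=
  cube_lt i (fun _ hj => (splice_below w u hj).symm) h (splice_at i w u)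

/-- The pairs `(u, w)` for which `u` and `splice i w u` are the left and right endpoint of an
`r`-edge of level `i + 1`. Its cardinality, divided by `4 ^ d / 2`, is the density of `r` at that
level, a normalisation which does not depend on `i`. -/
noncomputable def hits {d : ℕ} (r : Cube d → Cube d → Prop) (i : Fin d) :
    Finset (Cube d × Cube d) :=
  Finset.univ.filter fun p => ofLex p.1 i = false ∧ r p.1 (splice i p.2 p.1)

theorem mem_hits {d : ℕ} {r : Cube d → Cube d → Prop} {i : Fin d} {p : Cube d × Cube d} :
    p ∈ hits r i ↔ ofLex p.1 i = false ∧ r p.1 (splice i p.2 p.1) := by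
  rw [hits, Finset.mem_filter]
  exact and_iff_right (Finset.mem_univ p)

theorem card_hits_le {d : ℕ} (r : Cube d → Cube d → Prop) (i : Fin d) :
    (hits r i).card ≤ 4 ^ d := by
  refine (Finset.card_le_univ _).trans ?_
  rw [Fintype.card_prod, card_cube, ← mul_pow]; rfl

/-- The vertex `v` has a left `r`-neighbour at level `j + 1`. -/
def HasLeftNeighbour {d : ℕ} (r : Cube d → Cube d → Prop) (v : Cube d) (j : Fin d) : Prop :=
  ofLex v j = true ∧ ∃ u : Cube d, (∀ t < j, ofLex u t = ofLex v t) ∧ ofLex u j = false ∧ r u v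

/-- The `r`-edges `uv` whose right endpoint has a left neighbour at a level deeper than `i + 1`. -/
def clean {d : ℕ} (r : Cube d → Cube d → Prop) (i : Fin d) (u v : Cube d) : Prop :=
  r u v ∧ ∃ j, i < j ∧ HasLeftNeighbour r v j

/-- The `r`-edges removed by `clean`. -/
def lost {d : ℕ} (r : Cube d → Cube d → Prop) (i : Fin d) (u v : Cube d) : Prop :=
  r u v ∧ ¬ ∃ j, i < j ∧ HasLeftNeighbour r v j

theorem card_hits_clean {d : ℕ} (r : Cube d → Cube d → Prop) (i : Fin d) :
    (hits r i).card = (hits (clean r i) i).card + (hits (lost r i) i).card := by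
  rw [← Finset.card_filter_add_card_filter_not (s := hits r i)
    (fun p => ∃ j, i < j ∧ HasLeftNeighbour r (splice i p.2 p.1) j)]
  congr 2 <;> ext p <;> simp [mem_hits, clean, lost, and_assoc]

/-- Cleaning costs little in total: a lost pair at `i` determines a vertex `v` whose deepest left
level is `i`, so `i` can be recovered from `v`, and the remaining coordinates of the pair are those
of one further vertex of the cube. -/
theorem sum_card_hits_lost {d : ℕ} (r : Cube d → Cube d → Prop) :
    ∑ i, (hits (lost r i) i).card ≤ 4 ^ d := by
  rw [← Finset.card_sigma]
  have h4 : (4 : ℕ) ^ d = (Finset.univ : Finset (Cube d × Cube d)).card := by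
    rw [Finset.card_univ, Fintype.card_prod, card_cube, ← mul_pow]; rfl
  rw [h4]
  have left : ∀ (i : Fin d) (u w : Cube d), (u, w) ∈ hits (lost r i) i →
      HasLeftNeighbour r (splice i w u) i := by
    intro i u w h
    rw [mem_hits] at h
    exact ⟨splice_at i w u, u, fun t ht => (splice_below w u ht).symm, h.1, h.2.1⟩
  refine Finset.card_le_card_of_injOn
    (fun q => (splice q.1 q.2.2 q.2.1,
      toLex fun t => if t ≤ q.1 then ofLex q.2.2 t else ofLex q.2.1 t)) (by simp) ?_
  rintro ⟨i, u, w⟩ h ⟨i', u', w'⟩ h' heq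
  simp only [Finset.coe_sigma, Set.mem_sigma_iff, Finset.mem_coe, Finset.mem_univ,
    true_and] at h h'
  simp only [Prod.mk.injEq] at heq
  obtain ⟨e1, e2⟩ := heq
  have hi : i = i' := by
    rcases lt_trichotomy i i' with hlt | heq | hlt
    · exact absurd ⟨i', hlt, e1 ▸ left i' u' w' h'⟩ (mem_hits.1 h).2.2
    · exact heq
    · exact absurd ⟨i, hlt, e1 ▸ left i u w h⟩ (mem_hits.1 h').2.2
  subst hi
  have e1' : ∀ t, ofLex (splice i w u) t = ofLex (splice i w' u') t := fun t => by rw [e1]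
  have e2' : ∀ t, (if t ≤ i then ofLex w t else ofLex u t)
      = if t ≤ i then ofLex w' t else ofLex u' t := fun t => congrFun (congrArg ofLex e2) t
  have hu : u = u' := by
    refine Cube.ext_coord fun t => ?_
    rcases lt_trichotomy t i with ht | ht | ht
    · rw [← splice_below w u ht, e1' t, splice_below w' u' ht]
    · subst ht; exact (mem_hits.1 h).1.trans (mem_hits.1 h').1.symm
    · have := e2' t
      rwa [if_neg (not_le.2 ht), if_neg (not_le.2 ht)] at this
  have hw : w = w' := by
    refine Cube.ext_coord fun t => ?_
    rcases le_or_gt t i with ht | ht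
    · have := e2' t
      rwa [if_pos ht, if_pos ht] at this
    · rw [← splice_above w u ht, e1' t, splice_above w' u' ht]
  rw [hu, hw]

/-! ### Rich relations contain copies of `H_k` -/

/-- `r` contains the edges of an ordered copy of `H_k`, with vertices
`u 0 < v 0 < u 1 < v 1 < ⋯ < u (k - 1) < v (k - 1)`; values of `u` and `v` at indices `≥ k` are
irrelevant. -/
def HasH (k : ℕ) {d : ℕ} (r : Cube d → Cube d → Prop) : Prop :=
  ∃ u v : ℕ → Cube d, (∀ i < k, u i < v i) ∧ (∀ i j, i < j → j < k → v i < u j) ∧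
    ∀ i j, i ≤ j → j < k → r (u i) (v j)

/-- The number of coordinates at which `r` has density at least `2 * ε`. -/
noncomputable def richCount {d : ℕ} (r : Cube d → Cube d → Prop) (ε : ℝ) : ℕ :=
  (Finset.univ.filter fun i : Fin d => ε * 4 ^ d ≤ ((hits r i).card : ℝ)).card

/-- The `r`-edges which live strictly below a node at depth `i`, in its left half, and whose left
endpoint `u` is joined by a clean edge to the vertex `splice i w u` of the right half; that vertex
depends only on the node and on `w`. -/
def link {d : ℕ} (r : Cube d → Cube d → Prop) (i : Fin d) (w u v : Cube d) : Prop :=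
  r u v ∧ (∀ t ≤ i, ofLex u t = ofLex v t) ∧ ofLex u i = false ∧ clean r i u (splice i w u)

/-- A copy of `H_k` in a link extends by the vertex `splice i w u` as the new last vertex, preceded
by one of its left neighbours at a deeper level. -/
theorem hasH_succ_of_link {d k : ℕ} {r : Cube d → Cube d → Prop} {i : Fin d} {w : Cube d}
    (h : HasH (k + 1) (link r i w)) : HasH (k + 2) r := by
  obtain ⟨u, v, huv, hvu, hr⟩ := h
  have agree : ∀ j < k + 1, ∀ t ≤ i, ofLex (u j) t = ofLex (u 0) t := by
    intro j hj t ht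
    rw [(hr j j le_rfl hj).2.1 t ht, (hr 0 j (Nat.zero_le _) hj).2.1 t ht]
  have hsp : ∀ j < k + 1, splice i w (u j) = splice i w (u 0) := by
    intro j hj
    refine Cube.ext_coord fun t => ?_
    rcases lt_trichotomy t i with h1 | h1 | h1
    · rw [splice_below _ _ h1, splice_below _ _ h1, agree j hj t h1.le]
    · rw [h1, splice_at, splice_at]
    · rw [splice_above _ _ h1, splice_above _ _ h1]
  obtain ⟨-, j, hij, hvj, x, hx, hxj, hrx⟩ := (hr 0 0 le_rfl (Nat.succ_pos k)).2.2.2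
  set z := splice i w (u 0) with hz
  have hvx : ∀ j < k + 1, v j < x := by
    intro j' hj'
    have e := (hr 0 j' (Nat.zero_le _) hj').2.1
    refine cube_lt i (fun t ht => ?_) ?_ ?_
    · rw [hx t (ht.trans hij), hz, ← e t ht.le, splice_below _ _ ht]
    · rw [← e i le_rfl]; exact (hr 0 0 le_rfl (Nat.succ_pos k)).2.2.1
    · rw [hx i hij, hz, splice_at]
  have hxz : x < z := cube_lt j hx hxj hvj
  refine ⟨fun n => if n < k + 1 then u n else x, fun n => if n < k + 1 then v n else z,
    ?_, ?_, ?_⟩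
  · intro n hn
    by_cases h1 : n < k + 1
    · simpa [h1] using huv n h1
    · simpa [h1] using hxz
  · intro m n hmn hn
    have h0 : m < k + 1 := by omega
    by_cases h1 : n < k + 1
    · simpa [h0, h1] using hvu m n hmn h1
    · simpa [h0, h1] using hvx m h0
  · intro m n hmn hn
    by_cases h1 : n < k + 1
    · have h0 : m < k + 1 := by omega
      simpa [h0, h1] using (hr m n hmn h1).1
    · by_cases h0 : m < k + 1
      · have := (hr m m le_rfl h0).2.2.2.1
        rw [hsp m h0] at this
        simpa [h0, h1] using this
      · simpa [h0, h1] using hrx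

/-- The number of `w` for which `(u, w)` is a hit of `r` at `i`. -/
noncomputable def hitDeg {d : ℕ} (r : Cube d → Cube d → Prop) (i : Fin d) (u : Cube d) : ℕ :=
  (Finset.univ.filter fun w => ofLex u i = false ∧ r u (splice i w u)).card

theorem hitDeg_le {d : ℕ} (r : Cube d → Cube d → Prop) (i : Fin d) (u : Cube d) :
    hitDeg r i u ≤ 2 ^ d := by
  rw [← card_cube]; exact Finset.card_le_univ _

theorem card_hits_eq_sum {d : ℕ} (r : Cube d → Cube d → Prop) (i : Fin d) :
    (hits r i).card = ∑ u, hitDeg r i u := by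
  simp only [hits, hitDeg, Finset.card_filter]
  exact Fintype.sum_prod_type _

/-- On average over `w`, the hits of `link r i w` at a deeper `j` are at least as numerous as the
products of the clean degrees at `i` and `j`. -/
theorem sum_hitDeg_mul_le {d : ℕ} (r : Cube d → Cube d → Prop) {i j : Fin d} (hij : i < j) :
    ∑ u, hitDeg (clean r i) i u * hitDeg (clean r j) j u
      ≤ ∑ w, (hits (link r i w) j).card := by
  simp only [card_hits_eq_sum]
  rw [Finset.sum_comm]
  refine Finset.sum_le_sum fun u _ => ?_
  rw [hitDeg, hitDeg, ← Finset.card_product]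
  simp only [hitDeg]
  rw [← Finset.card_sigma]
  refine Finset.card_le_card_of_injOn (fun p => ⟨p.1, p.2⟩) ?_ ?_
  · rintro ⟨w, w'⟩ h
    simp only [Finset.coe_product, Set.mem_prod, Finset.mem_coe, Finset.mem_filter,
      Finset.mem_univ, true_and] at h
    simp only [Finset.coe_sigma, Set.mem_sigma_iff, Finset.mem_coe, Finset.mem_filter,
      Finset.mem_univ, true_and]
    exact ⟨h.2.1, h.2.2.1, fun t ht => (splice_below w' u (ht.trans_lt hij)).symm, h.1.1, h.1.2⟩
  · rintro ⟨w, w'⟩ _ ⟨z, z'⟩ _ h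
    simpa using h

/-- If `s` coordinates are `a`-rich after cleaning, then some link has total density at least
`(a ^ 2 * s - 1) / 2` over these coordinates: by Cauchy–Schwarz two of the coordinates are
correlated on average, up to the contribution of the diagonal. -/
theorem exists_link {d : ℕ} (r : Cube d → Cube d → Prop) {a : ℝ} (ha : 0 ≤ a)
    (I : Finset (Fin d)) (hI : I.Nonempty)
    (h : ∀ i ∈ I, a * 4 ^ d ≤ ((hits (clean r i) i).card : ℝ)) :
    ∃ (i : Fin d) (w : Cube d), (a ^ 2 * I.card - 1) / 2 * 4 ^ d ≤
      ∑ j ∈ I, ((hits (link r i w) j).card : ℝ) := by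
  set c : Fin d → Cube d → ℝ := fun i u => (hitDeg (clean r i) i u : ℝ) with hc
  have hc0 : ∀ i u, 0 ≤ c i u := fun i u => Nat.cast_nonneg _
  have hc1 : ∀ i u, c i u ≤ 2 ^ d := fun i u => by
    have := hitDeg_le (clean r i) i u
    simp only [hc]; exact_mod_cast this
  have hcard : ((Finset.univ : Finset (Cube d)).card : ℝ) = 2 ^ d := by
    rw [Finset.card_univ, card_cube]; norm_cast
  have h48 : (4 : ℝ) ^ d = 2 ^ d * 2 ^ d := by rw [← mul_pow]; norm_num
  have h2 : (0 : ℝ) < 2 ^ d := by positivity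
  set s : ℝ := (I.card : ℝ) with hs
  have hs0 : 0 ≤ s := Nat.cast_nonneg _
  have mean : a * s * 4 ^ d ≤ ∑ u, ∑ i ∈ I, c i u := by
    rw [Finset.sum_comm]
    have : ∑ i ∈ I, a * 4 ^ d ≤ ∑ i ∈ I, ∑ u, c i u := by
      refine Finset.sum_le_sum fun i hi => (h i hi).trans (le_of_eq ?_)
      rw [card_hits_eq_sum]; simp [hc]
    rw [Finset.sum_const, nsmul_eq_mul] at this
    linarith
  have cs := sq_sum_le_card_mul_sum_sq (s := (Finset.univ : Finset (Cube d)))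
    (f := fun u => ∑ i ∈ I, c i u)
  rw [hcard] at cs
  have h1 : (a * s * 4 ^ d) ^ 2 ≤ (∑ u, ∑ i ∈ I, c i u) ^ 2 :=
    pow_le_pow_left₀ (by positivity) mean 2
  -- The square splits into the diagonal and twice the part above the diagonal.
  have split : ∀ u, (∑ i ∈ I, c i u) ^ 2 ≤
      2 * (∑ i ∈ I, ∑ j ∈ I, if i < j then c i u * c j u else 0) + s * 4 ^ d := by
    intro u
    have e : (∑ i ∈ I, c i u) ^ 2 = (∑ i ∈ I, ∑ j ∈ I, if i < j then c i u * c j u else 0)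
        + (∑ i ∈ I, ∑ j ∈ I, if j < i then c i u * c j u else 0)
        + ∑ i ∈ I, c i u * c i u := by
      rw [sq, Finset.sum_mul_sum, ← Finset.sum_add_distrib, ← Finset.sum_add_distrib]
      refine Finset.sum_congr rfl fun i hi => ?_
      have : c i u * c i u = ∑ j ∈ I, if i = j then c i u * c j u else 0 := by simp [hi]
      rw [this, ← Finset.sum_add_distrib, ← Finset.sum_add_distrib]
      refine Finset.sum_congr rfl fun j _ => ?_
      rcases lt_trichotomy i j with hij | hij | hij
      · simp [hij, hij.not_gt, hij.ne]
      · simp [hij]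
      · simp [hij, hij.not_gt, hij.ne']
    have e2 : (∑ i ∈ I, ∑ j ∈ I, if j < i then c i u * c j u else 0)
        = ∑ i ∈ I, ∑ j ∈ I, if i < j then c i u * c j u else 0 := by
      rw [Finset.sum_comm]
      simp only [mul_comm]
    have e3 : ∑ i ∈ I, c i u * c i u ≤ s * 4 ^ d := by
      rw [hs, ← nsmul_eq_mul, ← Finset.sum_const, h48]
      exact Finset.sum_le_sum fun i _ => mul_le_mul (hc1 i u) (hc1 i u) (hc0 i u) h2.le
    rw [e, e2]; linarith
  have above : ∑ u, ∑ i ∈ I, ∑ j ∈ I, (if i < j then c i u * c j u else 0)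
      ≤ ∑ i ∈ I, ∑ w, ∑ j ∈ I, ((hits (link r i w) j).card : ℝ) := by
    have pair : ∀ i j, ∑ u, (if i < j then c i u * c j u else 0)
        ≤ ∑ w, ((hits (link r i w) j).card : ℝ) := by
      intro i j
      split_ifs with hij
      · have := sum_hitDeg_mul_le r hij
        change ∑ u, (hitDeg (clean r i) i u : ℝ) * (hitDeg (clean r j) j u : ℝ) ≤ _
        exact_mod_cast this
      · rw [Finset.sum_const_zero]
        exact Finset.sum_nonneg fun _ _ => Nat.cast_nonneg _
    calc _ = ∑ i ∈ I, ∑ u, ∑ j ∈ I, (if i < j then c i u * c j u else 0) := Finset.sum_comm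
      _ = ∑ i ∈ I, ∑ j ∈ I, ∑ u, (if i < j then c i u * c j u else 0) :=
        Finset.sum_congr rfl fun _ _ => Finset.sum_comm
      _ ≤ ∑ i ∈ I, ∑ j ∈ I, ∑ w, ((hits (link r i w) j).card : ℝ) :=
        Finset.sum_le_sum fun i _ => Finset.sum_le_sum fun j _ => pair i j
      _ = _ := Finset.sum_congr rfl fun _ _ => Finset.sum_comm
  have total : ∑ p ∈ I ×ˢ (Finset.univ : Finset (Cube d)), (a ^ 2 * s - 1) / 2 * 4 ^ d
      ≤ ∑ p ∈ I ×ˢ (Finset.univ : Finset (Cube d)),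
        ∑ j ∈ I, ((hits (link r p.1 p.2) j).card : ℝ) := by
    rw [Finset.sum_product (s := I) (t := Finset.univ)
      (f := fun p => ∑ j ∈ I, ((hits (link r p.1 p.2) j).card : ℝ))]
    refine le_trans ?_ above
    have h3 := Finset.sum_le_sum fun u (_ : u ∈ (Finset.univ : Finset (Cube d))) => split u
    rw [Finset.sum_add_distrib, ← Finset.mul_sum, Finset.sum_const, nsmul_eq_mul, hcard] at h3
    rw [Finset.sum_const, nsmul_eq_mul, Finset.card_product, Nat.cast_mul, hcard, ← hs]
    have h4 : 2 ^ d * (a ^ 2 * s ^ 2 * (2 ^ d * 4 ^ d))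
        ≤ 2 ^ d * ∑ u, (∑ i ∈ I, c i u) ^ 2 := by
      refine le_trans (le_of_eq ?_) (h1.trans cs)
      rw [h48]; ring
    have h5 := le_of_mul_le_mul_left h4 h2
    nlinarith
  obtain ⟨p, -, hp⟩ := Finset.exists_le_of_sum_le (hI.product Finset.univ_nonempty) total
  exact ⟨p.1, p.2, hp⟩

theorem hasH_of_rich (k : ℕ) : ∀ ε : ℝ, 0 < ε → ∃ C : ℕ, ∀ (d : ℕ) (r : Cube d → Cube d → Prop),
    C ≤ richCount r ε → HasH (k + 1) r := by
  induction k with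
  | zero =>
    intro ε hε
    refine ⟨1, fun d r h => ?_⟩
    obtain ⟨i, hi⟩ := Finset.card_pos.1 (Nat.lt_of_lt_of_le Nat.one_pos h)
    rw [Finset.mem_filter] at hi
    have : (0 : ℝ) < ((hits r i).card : ℝ) := lt_of_lt_of_le (by positivity) hi.2
    obtain ⟨⟨u, w⟩, hp⟩ := Finset.card_pos.1 (Nat.cast_pos.1 this)
    rw [mem_hits] at hp
    refine ⟨fun _ => u, fun _ => splice i w u, fun _ _ => lt_splice i w u hp.1, ?_,
      fun _ _ _ _ => hp.2⟩
    intro m n h1 h2; omega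
  | succ k ih =>
    intro ε hε
    obtain ⟨C', hC'⟩ := ih (ε ^ 2 / 16) (by positivity)
    obtain ⟨C₁, hC₁⟩ := exists_nat_ge (2 / ε)
    obtain ⟨C₂, hC₂⟩ := exists_nat_ge ((16 * C' + 8) / ε ^ 2)
    refine ⟨C₁ + C₂ + 1, fun d r h => ?_⟩
    set I₀ := Finset.univ.filter fun i : Fin d => ε * 4 ^ d ≤ ((hits r i).card : ℝ) with hI₀
    set I := I₀.filter fun i => ε / 2 * 4 ^ d ≤ ((hits (clean r i) i).card : ℝ) with hI
    set J := I₀.filter fun i => ¬ ε / 2 * 4 ^ d ≤ ((hits (clean r i) i).card : ℝ) with hJ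
    have h4 : (0 : ℝ) < 4 ^ d := by positivity
    have hIJ : I.card + J.card = I₀.card := Finset.card_filter_add_card_filter_not _
    -- A rich coordinate that is no longer rich after cleaning has lost half of its hits.
    have hJle : (J.card : ℝ) ≤ C₁ := by
      refine le_trans ?_ hC₁
      have h1 : ∑ i ∈ J, ε / 2 * 4 ^ d ≤ ∑ i ∈ J, ((hits (lost r i) i).card : ℝ) := by
        refine Finset.sum_le_sum fun i hi => ?_
        rw [hJ, Finset.mem_filter, hI₀, Finset.mem_filter] at hi
        have e : ((hits r i).card : ℝ) = (hits (clean r i) i).card + (hits (lost r i) i).card := by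
          exact_mod_cast card_hits_clean r i
        have := hi.1.2
        have := hi.2
        linarith
      have h2 : ∑ i ∈ J, ((hits (lost r i) i).card : ℝ) ≤ 4 ^ d := by
        refine le_trans (Finset.sum_le_sum_of_subset_of_nonneg (Finset.subset_univ J)
          fun _ _ _ => Nat.cast_nonneg _) ?_
        exact_mod_cast sum_card_hits_lost r
      rw [Finset.sum_const, nsmul_eq_mul] at h1
      rw [le_div_iff₀ hε]
      have h3 : (J.card : ℝ) * (ε / 2) * 4 ^ d ≤ 1 * 4 ^ d := by linarith
      have := le_of_mul_le_mul_right h3 h4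
      linarith
    have hJ' : J.card ≤ C₁ := by exact_mod_cast hJle
    have hIge : C₂ + 1 ≤ I.card := by
      have : C₁ + C₂ + 1 ≤ I₀.card := h
      omega
    have hIr : (16 * C' + 8) / ε ^ 2 ≤ (I.card : ℝ) :=
      hC₂.trans (by exact_mod_cast (Nat.le_succ C₂).trans hIge)
    rw [div_le_iff₀ (by positivity)] at hIr
    obtain ⟨i, w, hw⟩ := exists_link r (a := ε / 2) (by positivity) I
      (Finset.card_pos.1 (by omega)) fun i hi => (Finset.mem_filter.1 hi).2
    refine hasH_succ_of_link (i := i) (w := w) (hC' d _ ?_)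
    -- Few rich coordinates would make the total density of the link too small.
    have up : ∑ j ∈ I, ((hits (link r i w) j).card : ℝ)
        ≤ (richCount (link r i w) (ε ^ 2 / 16) + ε ^ 2 / 16 * I.card) * 4 ^ d := by
      have h1 : ∀ j ∈ I, ((hits (link r i w) j).card : ℝ) ≤
          (if ε ^ 2 / 16 * 4 ^ d ≤ ((hits (link r i w) j).card : ℝ) then 4 ^ d else 0)
            + ε ^ 2 / 16 * 4 ^ d := by
        intro j _
        split_ifs with hj
        · have : ((hits (link r i w) j).card : ℝ) ≤ 4 ^ d := by
            exact_mod_cast card_hits_le _ j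
          have : 0 ≤ ε ^ 2 / 16 * 4 ^ d := by positivity
          linarith
        · push Not at hj; linarith
      refine (Finset.sum_le_sum h1).trans ?_
      rw [Finset.sum_add_distrib, Finset.sum_const, nsmul_eq_mul]
      have h2 : ∑ j ∈ I, (if ε ^ 2 / 16 * 4 ^ d ≤ ((hits (link r i w) j).card : ℝ)
          then (4 : ℝ) ^ d else 0) ≤ richCount (link r i w) (ε ^ 2 / 16) * 4 ^ d := by
        refine (Finset.sum_le_sum_of_subset_of_nonneg (Finset.subset_univ I)
          fun _ _ _ => by positivity).trans (le_of_eq ?_)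
        rw [← Finset.sum_filter, Finset.sum_const, nsmul_eq_mul, richCount]
      linarith
    have h5 := le_of_mul_le_mul_right (hw.trans up) h4
    have h6 : (C' : ℝ) ≤ richCount (link r i w) (ε ^ 2 / 16) := by nlinarith
    exact_mod_cast h6

/-! ### Rich graphs on the cube -/

theorem lt_and_atLevel_iff {d : ℕ} {x y : Cube d} {i : Fin d} :
    (x < y ∧ atLevel ((i : ℕ) + 1) x y) ↔
      (∀ j < i, ofLex x j = ofLex y j) ∧ ofLex x i = false ∧ ofLex y i = true := by
  constructor
  · rintro ⟨hlt, i', hi', hne, hag⟩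
    obtain rfl : i' = i := Fin.ext (by omega)
    refine ⟨hag, ?_⟩
    by_contra hcon
    have hx : ofLex x i' = true ∧ ofLex y i' = false := by
      revert hne hcon
      cases ofLex x i' <;> cases ofLex y i' <;> simp
    exact lt_asymm hlt (cube_lt i' (fun j hj => (hag j hj).symm) hx.2 hx.1)
  · rintro ⟨hag, hx, hy⟩
    exact ⟨cube_lt i hag hx hy, i, rfl, by rw [hx, hy]; decide, hag⟩

/-- The `r`-edges of level `i + 1`. -/
noncomputable def levelPairs {d : ℕ} (r : Cube d → Cube d → Prop) (i : Fin d) :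
    Finset (Cube d × Cube d) :=
  Finset.univ.filter fun p => p.1 < p.2 ∧ r p.1 p.2 ∧ atLevel ((i : ℕ) + 1) p.1 p.2

theorem card_agree_above {d : ℕ} (i : Fin d) (v : Cube d) :
    (Finset.univ.filter fun w : Cube d => ∀ j, i < j → ofLex w j = ofLex v j).card
      = 2 ^ ((i : ℕ) + 1) := by
  have e : (Finset.univ.filter fun w : Cube d => ∀ j, i < j → ofLex w j = ofLex v j).card
      = (Fintype.piFinset fun j : Fin d => if i < j then {ofLex v j} else Finset.univ).card := by
    refine Finset.card_bij (fun w _ => ofLex w) ?_ ?_ ?_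
    · intro w hw
      rw [Finset.mem_filter] at hw
      rw [Fintype.mem_piFinset]
      intro j
      split_ifs with hj
      · exact Finset.mem_singleton.2 (hw.2 j hj)
      · exact Finset.mem_univ _
    · intro w _ w' _ h
      exact ofLex.injective h
    · intro g hg
      rw [Fintype.mem_piFinset] at hg
      refine ⟨toLex g, Finset.mem_filter.2 ⟨Finset.mem_univ _, fun j hj => ?_⟩, rfl⟩
      have := hg j
      rw [if_pos hj] at this
      exact Finset.mem_singleton.1 this
  rw [e, Fintype.card_piFinset]
  have e2 : ∀ j : Fin d, (if i < j then ({ofLex v j} : Finset Bool) else Finset.univ).card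
      = if j ∈ Finset.Iic i then 2 else 1 := by
    intro j
    by_cases hj : i < j
    · simp [hj]
    · simp [hj, not_lt.1 hj]
  rw [Finset.prod_congr rfl fun j _ => e2 j, Finset.prod_ite_mem, Finset.univ_inter,
    Finset.prod_const, Fin.card_Iic]

/-- Each edge of level `i + 1` is hit once for every `w` agreeing with its right endpoint above
`i`. -/
theorem card_hits_eq {d : ℕ} (r : Cube d → Cube d → Prop) (i : Fin d) :
    (hits r i).card = (levelPairs r i).card * 2 ^ ((i : ℕ) + 1) := by
  have hm : ∀ p ∈ hits r i, (p.1, splice i p.2 p.1) ∈ levelPairs r i := by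
    rintro ⟨u, w⟩ hp
    rw [mem_hits] at hp
    have := lt_and_atLevel_iff.2
      ⟨fun j hj => (splice_below w u hj).symm, hp.1, splice_at i w u⟩
    exact Finset.mem_filter.2 ⟨Finset.mem_univ _, this.1, hp.2, this.2⟩
  rw [Finset.card_eq_sum_card_fiberwise (t := levelPairs r i) hm, ← smul_eq_mul,
    ← Finset.sum_const]
  refine Finset.sum_congr rfl ?_
  rintro ⟨u, v⟩ huv
  rw [levelPairs, Finset.mem_filter] at huv
  obtain ⟨hag, hu, hv⟩ := lt_and_atLevel_iff.1 ⟨huv.2.1, huv.2.2.2⟩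
  rw [← card_agree_above i v]
  refine Finset.card_bij (fun p _ => p.2) ?_ ?_ ?_
  · rintro ⟨u', w⟩ h
    rw [Finset.mem_filter, Prod.mk.injEq] at h
    refine Finset.mem_filter.2 ⟨Finset.mem_univ _, fun j hj => ?_⟩
    rw [← h.2.2, splice_above _ _ hj]
  · rintro ⟨u', w⟩ h ⟨u'', w'⟩ h' e
    rw [Finset.mem_filter, Prod.mk.injEq] at h h'
    exact Prod.ext (h.2.1.trans h'.2.1.symm) e
  · intro w hw
    rw [Finset.mem_filter] at hw
    have hs : splice i w u = v := by
      refine Cube.ext_coord fun t => ?_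
      rcases lt_trichotomy t i with h1 | h1 | h1
      · rw [splice_below _ _ h1, hag t h1]
      · rw [h1, splice_at, hv]
      · rw [splice_above _ _ h1, hw.2 t h1]
    refine ⟨(u, w), ?_, rfl⟩
    rw [Finset.mem_filter, mem_hits, hs]
    exact ⟨⟨hu, huv.2.2.1⟩, rfl⟩

theorem levelCount_eq {d : ℕ} (G : SimpleGraph (Cube d)) (i : Fin d) :
    levelCount G ((i : ℕ) + 1) = (levelPairs G.Adj i).card := by
  rw [levelCount, ← Set.ncard_coe_finset]
  congr 1
  ext p
  simp [levelPairs]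

theorem tau_mul {d : ℕ} (i : Fin d) : tau d ((i : ℕ) + 1) * 2 ^ ((i : ℕ) + 1) * 2 = 4 ^ d := by
  have := i.2
  rw [tau, ← pow_add, ← pow_succ, show (4 : ℕ) = 2 ^ 2 by norm_num, ← pow_mul]
  congr 1
  omega

/-- Richness at a level amounts to a lower bound on the number of hits that does not depend on
the level; the factor `2` is there because hits have `false` at coordinate `i`. -/
theorem le_richCount {d : ℕ} {G : SimpleGraph (Cube d)} {ε : ℝ} {C : ℕ}
    (h : IsRichGraph G ε C) : C ≤ richCount G.Adj (ε / 2) := by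
  have h' : C ≤ {ℓ : ℕ | ℓ ∈ Finset.Icc 1 d ∧ IsRichLevel G ε ℓ}.ncard := by
    exact Nat.cast_le.1 h
  refine h'.trans ?_
  rw [richCount, ← Finset.card_image_of_injective (f := fun i : Fin d => (i : ℕ) + 1) _
    (fun a b hab => Fin.ext (by simpa using hab)), ← Set.ncard_coe_finset]
  refine Set.ncard_le_ncard ?_ (Finset.finite_toSet _)
  rintro ℓ ⟨hℓ, hr⟩
  rw [Finset.mem_Icc] at hℓ
  obtain ⟨m, rfl⟩ : ∃ m, ℓ = m + 1 := ⟨ℓ - 1, by omega⟩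
  rw [Finset.mem_coe, Finset.mem_image]
  refine ⟨⟨m, by omega⟩, Finset.mem_filter.2 ⟨Finset.mem_univ _, ?_⟩, rfl⟩
  set i : Fin d := ⟨m, by omega⟩
  have hr' : ε * (tau d ((i : ℕ) + 1) : ℝ) ≤ ((levelPairs G.Adj i).card : ℝ) := by
    rw [← levelCount_eq]; exact hr
  have ht : (tau d ((i : ℕ) + 1) : ℝ) * 2 ^ ((i : ℕ) + 1) * 2 = 4 ^ d := by
    exact_mod_cast tau_mul i
  rw [card_hits_eq, ← ht]
  push_cast
  have hp : (0 : ℝ) < 2 ^ ((i : ℕ) + 1) := by positivity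
  calc ε / 2 * ((tau d ((i : ℕ) + 1) : ℝ) * 2 ^ ((i : ℕ) + 1) * 2)
      = ε * (tau d ((i : ℕ) + 1) : ℝ) * 2 ^ ((i : ℕ) + 1) := by ring
    _ ≤ _ := mul_le_mul_of_nonneg_right hr' hp.le

theorem containsOrderedCopy_of_hasH {k d : ℕ} {G : SimpleGraph (Cube d)} (h : HasH k G.Adj) :
    ContainsOrderedCopy (Hgraph k) G := by
  obtain ⟨u, v, huv, hvu, hr⟩ := h
  refine ⟨fun a => if (ofLex a).2 = true then v (ofLex a).1 else u (ofLex a).1, ?_, ?_⟩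
  · intro a b hab
    rw [Prod.Lex.lt_iff] at hab
    have hb := (ofLex b).1.2
    have ha := (ofLex a).1.2
    rcases hab with hlt | ⟨heq, hlt⟩
    · have h1 : v (ofLex a).1 < u (ofLex b).1 := hvu _ _ hlt hb
      have h2 := huv _ ha
      have h3 := huv _ hb
      dsimp only
      split_ifs
      · exact h1.trans h3
      · exact h1
      · exact h2.trans (h1.trans h3)
      · exact h2.trans h1
    · rw [Bool.lt_iff] at hlt
      dsimp only
      rw [hlt.1, hlt.2, heq, if_neg (by decide), if_pos rfl]
      exact huv _ hb
  · intro a b hab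
    rw [Hgraph, SimpleGraph.fromRel_adj] at hab
    rcases hab.2 with ⟨h1, h2, h3⟩ | ⟨h1, h2, h3⟩
    · simpa [h1, h2] using hr _ _ h3 (ofLex b).1.2
    · simpa [h1, h2] using (hr _ _ h3 (ofLex a).1.2).symm

theorem exists_containsOrderedCopy (k : ℕ) {ε : ℝ} (hε : 0 < ε) :
    ∃ C : ℕ, ∀ (d : ℕ) (G : SimpleGraph (Cube d)),
      C ≤ richCount G.Adj ε → ContainsOrderedCopy (Hgraph k) G := by
  cases k with
  | zero =>
    refine ⟨0, fun d G _ => containsOrderedCopy_of_hasH ⟨fun _ => toLex fun _ => false,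
      fun _ => toLex fun _ => false, ?_, ?_, ?_⟩⟩
    all_goals intros; omega
  | succ k =>
    obtain ⟨C, hC⟩ := hasH_of_rich k ε hε
    exact ⟨C, fun d G h => containsOrderedCopy_of_hasH (hC d G.Adj h)⟩

/-! ### From weighted graphs to unweighted graphs -/

/-- Edges correspond to adjacent ordered pairs, the two ends of each edge being ordered by `f`. -/
theorem ncard_edgeSet_eq {β V : Type*} [Fintype β] [LinearOrder V] (H : SimpleGraph β) (f : β → V)
    (hf : ∀ p q, H.Adj p q → f p ≠ f q) :
    H.edgeSet.ncard
      = (Finset.univ.filter fun p : β × β => f p.1 < f p.2 ∧ H.Adj p.1 p.2).card := by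
  rw [← Set.ncard_coe_finset, ← Set.InjOn.ncard_image (f := fun p : β × β => s(p.1, p.2))]
  · congr 1
    ext e
    induction e using Sym2.ind with
    | _ a b =>
      simp only [SimpleGraph.mem_edgeSet, Set.mem_image, Finset.mem_coe, Finset.mem_filter,
        Finset.mem_univ, true_and, Prod.exists, Sym2.eq_iff]
      constructor
      · intro h
        rcases lt_or_gt_of_ne (hf a b h) with hlt | hlt
        · exact ⟨a, b, ⟨hlt, h⟩, Or.inl ⟨rfl, rfl⟩⟩
        · exact ⟨b, a, ⟨hlt, h.symm⟩, Or.inr ⟨rfl, rfl⟩⟩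
      · rintro ⟨x, y, ⟨-, h⟩, ⟨rfl, rfl⟩ | ⟨rfl, rfl⟩⟩
        · exact h
        · exact h.symm
  · rintro ⟨a, b⟩ h ⟨a', b'⟩ h' e
    simp only [Finset.mem_coe, Finset.mem_filter] at h h'
    simp only [Sym2.eq_iff] at e
    rcases e with ⟨rfl, rfl⟩ | ⟨rfl, rfl⟩
    · rfl
    · exact absurd h.2.1 (lt_asymm h'.2.1)

section Blowup

variable {V A : Type} [Fintype V] [LinearOrder V] [AddCommGroup A] [Fintype A]

/-- The pairs of labels `(a, b)` for which the copy of `x` labelled `a` and the copy of `y`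
labelled `b` are joined in the blow-up, for `x < y`. There are `#(S x y)` times a constant. -/
noncomputable def compat (S : V → V → Finset A) (x y : V) : Finset ((V → A) × (V → A)) :=
  Finset.univ.filter fun ab => ab.1 y - ab.2 x ∈ S x y

/-- The number of pairs of labels joined between the copies of `x` and of `y`, per element
of `S x y`. -/
noncomputable def labelFactor (V A : Type) [Fintype V] [LinearOrder V] [Fintype A] : ℕ :=
  Fintype.card (V → A) * Fintype.card A ^ (Fintype.card V - 1)

theorem card_compat (S : V → V → Finset A) (x y : V) :
    (compat S x y).card = (S x y).card * labelFactor V A := by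
  have h : ∀ b : V → A, (Finset.univ.filter fun a : V → A => a y - b x ∈ S x y).card
      = (S x y).card * Fintype.card A ^ (Fintype.card V - 1) := by
    intro b
    have e : (Finset.univ.filter fun a : V → A => a y - b x ∈ S x y)
        = Fintype.piFinset fun z =>
            if z = y then (S x y).map (addRightEmbedding (b x)) else Finset.univ := by
      ext a
      simp only [Finset.mem_filter, Finset.mem_univ, true_and, Fintype.mem_piFinset]
      constructor
      · intro ha z
        split_ifs with hz
        · subst hz
          exact Finset.mem_map.2 ⟨_, ha, by simp⟩
        · exact Finset.mem_univ _
      · intro ha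
        have := ha y
        rw [if_pos rfl, Finset.mem_map] at this
        obtain ⟨c, hc, hca⟩ := this
        rw [← hca]
        simpa using hc
    rw [e, Fintype.card_piFinset, ← Finset.mul_prod_erase _ _ (Finset.mem_univ y), if_pos rfl,
      Finset.card_map]
    congr 1
    rw [Finset.prod_congr rfl (g := fun _ => Fintype.card A), Finset.prod_const,
      Finset.card_erase_of_mem (Finset.mem_univ y), Finset.card_univ]
    intro z hz
    rw [if_neg (Finset.ne_of_mem_erase hz), Finset.card_univ]
  have h2 : (compat S x y).card
      = ∑ b : V → A, (Finset.univ.filter fun a : V → A => a y - b x ∈ S x y).card := by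
    simp only [compat, Finset.card_filter]
    exact Fintype.sum_prod_type_right _
  rw [h2, Finset.sum_congr rfl fun b _ => h b, Finset.sum_const, Finset.card_univ, labelFactor,
    smul_eq_mul, mul_left_comm]

/-- The labellings `s` of `V` for which the vertices `(x, s x)` form a clique in the blow-up. -/
noncomputable def cliques (S : V → V → Finset A) : Finset (V → V → A) :=
  Finset.univ.filter fun s => ∀ x y, x < y → (s x, s y) ∈ compat S x y

/-- The labels can be chosen independently for each pair, since the membership condition for
`x < y` involves only `s x y` and `s y x`. -/
theorem cliques_nonempty {S : V → V → Finset A} (hS : ∀ x y, x < y → (S x y).Nonempty) :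
    (cliques S).Nonempty := by
  refine ⟨fun x y => if h : x < y then (hS x y h).choose else 0, ?_⟩
  rw [cliques, Finset.mem_filter]
  refine ⟨Finset.mem_univ _, fun x y h => ?_⟩
  rw [compat, Finset.mem_filter]
  refine ⟨Finset.mem_univ _, ?_⟩
  simpa [h, h.not_gt] using (hS x y h).choose_spec

/-- The cliques through two given vertices `(x, ab.1)` and `(y, ab.2)`. -/
noncomputable def cliquesThrough (S : V → V → Finset A) (x y : V) (ab : (V → A) × (V → A)) :
    Finset (V → V → A) :=
  (cliques S).filter fun s => (s x, s y) = ab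

/-- Translating the labels of `x` and `y`, and compensating in the labels of the other vertices,
turns cliques through one edge into cliques through another. -/
theorem card_cliquesThrough_le {S : V → V → Finset A} {x y : V} (hxy : x < y)
    {ab ab' : (V → A) × (V → A)} (h' : ab' ∈ compat S x y) :
    (cliquesThrough S x y ab).card ≤ (cliquesThrough S x y ab').card := by
  obtain ⟨a, b⟩ := ab
  obtain ⟨a', b'⟩ := ab'
  let t : V → V → A := fun z w => if z = x then a' w - a w else if z = y then b' w - b w
    else if w = x then a' z - a z else if w = y then b' z - b z else 0
  refine Finset.card_le_card_of_injOn (fun s => s + t) ?_ ?_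
  · intro s hs
    rw [Finset.mem_coe, cliquesThrough, Finset.mem_filter, Prod.mk.injEq] at hs ⊢
    obtain ⟨hs, hx, hy⟩ := hs
    have hx' : (s + t) x = a' := by
      funext w; simp [t, hx]
    have hy' : (s + t) y = b' := by
      funext w; simp [t, hy, hxy.ne']
    refine ⟨?_, hx', hy'⟩
    rw [cliques, Finset.mem_filter] at hs ⊢
    refine ⟨Finset.mem_univ _, fun z w hzw => ?_⟩
    by_cases hc : z = x ∧ w = y
    · obtain ⟨rfl, rfl⟩ := hc
      change ((s + t) z, (s + t) w) ∈ compat S z w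
      rw [hx', hy']; exact h'
    · have hsym : t z w = t w z := by
        simp only [t]
        by_cases h1 : z = x <;> by_cases h2 : z = y <;> by_cases h3 : w = x <;>
          by_cases h4 : w = y <;> simp_all
        all_goals exact absurd hzw (lt_asymm hxy)
      have := hs.2 z w hzw
      rw [compat, Finset.mem_filter] at this ⊢
      refine ⟨Finset.mem_univ _, ?_⟩
      have e : (s + t) z w - (s + t) w z = s z w - s w z := by
        simp [hsym]
      dsimp only
      rw [e]; exact this.2
  · intro s _ s' _ h
    exact add_right_cancel h

/-- By symmetry, all edges between the copies of `x` and of `y` lie in equally many cliques. -/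
theorem card_cliques_eq {S : V → V → Finset A} {x y : V} (hxy : x < y)
    {ab : (V → A) × (V → A)} (h : ab ∈ compat S x y) :
    (cliques S).card = (S x y).card * labelFactor V A * (cliquesThrough S x y ab).card := by
  have hm : ∀ s ∈ cliques S, (s x, s y) ∈ compat S x y := fun s hs =>
    (Finset.mem_filter.1 hs).2 x y hxy
  rw [Finset.card_eq_sum_card_fiberwise (t := compat S x y) hm, ← card_compat, ← smul_eq_mul,
    ← Finset.sum_const]
  exact Finset.sum_congr rfl fun ab' h' =>
    le_antisymm (card_cliquesThrough_le hxy h) (card_cliquesThrough_le hxy h')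

/-- The total `S`-weight `∑ #(S x y)` of the edges of a graph on `V`. -/
noncomputable def weight (S : V → V → Finset A) (G : SimpleGraph V) : ℕ :=
  ∑ p ∈ Finset.univ.filter (fun p : V × V => p.1 < p.2 ∧ G.Adj p.1 p.2), (S p.1 p.2).card

variable {M : ℕ} (e : Fin M ≃ V × (V → A))

/-- The blow-up of the weighted complete graph on `V`: each vertex is replaced by the copies given
by all labels in `V → A`, and two copies of `x < y` are joined according to `compat S x y`. The
bijection `e` transports it to `Fin M`. -/
def blowup (S : V → V → Finset A) : SimpleGraph (Fin M) where
  Adj p q := ((e p).1 < (e q).1 ∧ ((e p).2, (e q).2) ∈ compat S (e p).1 (e q).1) ∨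
    ((e q).1 < (e p).1 ∧ ((e q).2, (e p).2) ∈ compat S (e q).1 (e p).1)
  symm := ⟨fun _ _ h => h.symm⟩
  loopless := ⟨fun _ h => by rcases h with h | h <;> exact lt_irrefl _ h.1⟩

/-- The pairs of labels joined in `H` between the copies of `x` and of `y`. -/
noncomputable def edgesBetween (H : SimpleGraph (Fin M)) (x y : V) :
    Finset ((V → A) × (V → A)) :=
  Finset.univ.filter fun ab => H.Adj (e.symm (x, ab.1)) (e.symm (y, ab.2))

theorem edgesBetween_subset {S : V → V → Finset A} {H : SimpleGraph (Fin M)}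
    (hH : H ≤ blowup e S) {x y : V} (hxy : x < y) : edgesBetween e H x y ⊆ compat S x y := by
  intro ab hab
  have := hH (Finset.mem_filter.1 hab).2
  simpa [blowup, hxy, hxy.not_gt] using this

theorem edgesBetween_blowup (S : V → V → Finset A) {x y : V} (hxy : x < y) :
    edgesBetween e (blowup e S) x y = compat S x y := by
  refine (edgesBetween_subset e le_rfl hxy).antisymm fun ab hab => ?_
  refine Finset.mem_filter.2 ⟨Finset.mem_univ _, ?_⟩
  simpa [blowup, hxy, hxy.not_gt] using hab

theorem edgeCount_eq_sum {S : V → V → Finset A} {H : SimpleGraph (Fin M)}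
    (hH : H ≤ blowup e S) :
    edgeCount H = ∑ p ∈ Finset.univ.filter (fun p : V × V => p.1 < p.2),
      (edgesBetween e H p.1 p.2).card := by
  have hne : ∀ p q, H.Adj p q → (e p).1 ≠ (e q).1 := by
    intro p q h
    rcases hH h with h | h
    · exact h.1.ne
    · exact h.1.ne'
  rw [edgeCount, ncard_edgeSet_eq H (fun p => (e p).1) hne, ← Finset.card_sigma]
  refine Finset.card_bij (fun p _ => ⟨((e p.1).1, (e p.2).1), ((e p.1).2, (e p.2).2)⟩) ?_ ?_ ?_
  · rintro ⟨p, q⟩ h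
    simpa [edgesBetween] using h
  · rintro ⟨p, q⟩ _ ⟨p', q'⟩ _ h
    simp only [Sigma.mk.injEq, Prod.mk.injEq, heq_eq_eq] at h
    obtain ⟨⟨h1, h2⟩, h3, h4⟩ := h
    exact Prod.ext (e.injective (Prod.ext h1 h3)) (e.injective (Prod.ext h2 h4))
  · rintro ⟨⟨x, y⟩, a, b⟩ h
    refine ⟨(e.symm (x, a), e.symm (y, b)), ?_, by simp⟩
    simpa [edgesBetween] using h

theorem edgeCount_blowup (S : V → V → Finset A) :
    edgeCount (blowup e S) = labelFactor V A * weight S (⊤ : SimpleGraph V) := by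
  have hw : ∀ G : SimpleGraph V, (∀ x y, x < y → G.Adj x y) → weight S G
      = ∑ p ∈ Finset.univ.filter (fun p : V × V => p.1 < p.2), (S p.1 p.2).card := fun _ hG =>
    Finset.sum_congr (Finset.filter_congr fun _ _ => ⟨fun h => h.1, fun h => ⟨h, hG _ _ h⟩⟩)
      fun _ _ => rfl
  rw [edgeCount_eq_sum e le_rfl, hw ⊤ fun _ _ h => h.ne, Finset.mul_sum]
  refine Finset.sum_congr rfl fun p hp => ?_
  rw [edgesBetween_blowup e S (Finset.mem_filter.1 hp).2, card_compat, mul_comm]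

/-- The graph induced by `H` on the vertices `(x, s x)`, viewed as a graph on `V`. -/
def pullback (H : SimpleGraph (Fin M)) (s : V → V → A) : SimpleGraph V :=
  H.comap fun x => e.symm (x, s x)

/-- The pullback of `H` along a uniformly random clique has expected weight proportional to the
number of edges of `H`. -/
theorem sum_weight_pullback {S : V → V → Finset A} {H : SimpleGraph (Fin M)}
    (hH : H ≤ blowup e S) :
    labelFactor V A * ∑ s ∈ cliques S, weight S (pullback e H s)
      = (cliques S).card * edgeCount H := by
  have h1 : ∑ s ∈ cliques S, weight S (pullback e H s)
      = ∑ p ∈ Finset.univ.filter (fun p : V × V => p.1 < p.2),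
        (S p.1 p.2).card * ((cliques S).filter fun s => (pullback e H s).Adj p.1 p.2).card := by
    have : ∀ s, weight S (pullback e H s)
        = ∑ p ∈ Finset.univ.filter (fun p : V × V => p.1 < p.2),
          if (pullback e H s).Adj p.1 p.2 then (S p.1 p.2).card else 0 := by
      intro s
      rw [weight, ← Finset.sum_filter, Finset.filter_filter]
    rw [Finset.sum_congr rfl fun s _ => this s, Finset.sum_comm]
    refine Finset.sum_congr rfl fun p _ => ?_
    rw [← Finset.sum_filter, Finset.sum_const, smul_eq_mul, mul_comm]
  rw [h1, edgeCount_eq_sum e hH, Finset.mul_sum, Finset.mul_sum]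
  refine Finset.sum_congr rfl ?_
  rintro ⟨x, y⟩ hxy
  have hxy : x < y := (Finset.mem_filter.1 hxy).2
  have h2 : ((cliques S).filter fun s => (pullback e H s).Adj x y).card
      = ∑ ab ∈ edgesBetween e H x y, (cliquesThrough S x y ab).card := by
    have hm : ∀ s ∈ (cliques S).filter (fun s => (pullback e H s).Adj x y),
        (s x, s y) ∈ edgesBetween e H x y := fun s hs =>
      Finset.mem_filter.2 ⟨Finset.mem_univ _, (Finset.mem_filter.1 hs).2⟩
    rw [Finset.card_eq_sum_card_fiberwise (t := edgesBetween e H x y) hm]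
    refine Finset.sum_congr rfl fun ab hab => ?_
    rw [cliquesThrough, Finset.filter_filter]
    congr 1
    refine Finset.filter_congr fun s _ => ⟨fun h => h.2, fun h => ⟨?_, h⟩⟩
    subst h
    exact (Finset.mem_filter.1 hab).2
  dsimp only
  rw [h2, ← mul_assoc, Finset.mul_sum, mul_comm (cliques S).card, ← smul_eq_mul
    (edgesBetween e H x y).card, ← Finset.sum_const]
  refine Finset.sum_congr rfl fun ab hab => ?_
  rw [card_cliques_eq hxy (edgesBetween_subset e hH hxy hab), mul_comm (labelFactor V A)]

/-- If every `F`-free graph on `V` has at most the proportion `K` of the total weight, then the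
unweighted blow-up has relative Turán density at most `K`. -/
theorem relTuranDensity_le_of_weight {α : Type*} [Preorder α] {F : SimpleGraph α}
    (hF : ∀ u, ∃ v, F.Adj u v) (S : V → V → Finset A) (hS : ∀ x y, x < y → (S x y).Nonempty)
    (hpos : 0 < weight S (⊤ : SimpleGraph V)) {K : ℝ} (hK : 0 ≤ K)
    (h : ∀ G : SimpleGraph V, ¬ ContainsOrderedCopy F G →
      (weight S G : ℝ) ≤ K * weight S (⊤ : SimpleGraph V)) :
    relTuranDensity F ≤ K := by
  -- The copies are ordered lexicographically, with an arbitrary order on the labels.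
  let c := Fintype.equivFin (V → A)
  let o : Fin (Fintype.card (Lex (V × Fin (Fintype.card (V → A))))) ≃o
      Lex (V × Fin (Fintype.card (V → A))) := Fintype.orderIsoFinOfCardEq _ rfl
  let e : Fin (Fintype.card (Lex (V × Fin (Fintype.card (V → A))))) ≃ V × (V → A) :=
    (o.toEquiv.trans ofLex).trans ((Equiv.refl V).prodCongr c.symm)
  have he : ∀ p q : V × (V → A), p.1 < q.1 → e.symm p < e.symm q := by
    intro p q hpq
    refine o.symm.lt_iff_lt.2 ?_
    exact Prod.Lex.lt_iff.2 (Or.inl hpq)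
  have hQ : 0 < labelFactor V A := by
    have : 0 < Fintype.card A := Fintype.card_pos
    have : 0 < Fintype.card (V → A) := Fintype.card_pos
    unfold labelFactor
    positivity
  have hR : 0 < edgeCount (blowup e S) := by
    rw [edgeCount_blowup]; exact Nat.mul_pos hQ hpos
  have hΩ : 0 < (cliques S).card := Finset.card_pos.2 (cliques_nonempty hS)
  unfold relTuranDensity
  refine csInf_le_of_le (b := relTuranDensityIn F (blowup e S)) ⟨0, ?_⟩
    ⟨_, blowup e S, hR, rfl⟩ ?_
  · rintro _ ⟨n, G, -, rfl⟩
    refine Real.sSup_nonneg ?_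
    rintro _ ⟨G', -, rfl⟩
    positivity
  refine Real.sSup_le ?_ hK
  rintro _ ⟨G', hG', rfl⟩
  have hR' : (0 : ℝ) < edgeCount (blowup e S) := by exact_mod_cast hR
  rw [div_le_iff₀ hR']
  have hH : G'.spanningCoe ≤ blowup e S := G'.spanningCoe_le
  have hcount : edgeCount G'.coe = edgeCount G'.spanningCoe := by
    rw [edgeCount, edgeCount, ← Set.ncard_image_of_injective G'.coe.edgeSet
      (Sym2.map.injective Subtype.val_injective), G'.image_coe_edgeSet_coe]
    rfl
  -- Vertices of `F` are not isolated, so a copy of `F` in a pullback has its vertices in `G'`.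
  have hfree : ∀ s, ¬ ContainsOrderedCopy F (pullback e G'.spanningCoe s) := by
    rintro s ⟨φ, hφ, hadj⟩
    refine hG' ⟨fun u => ⟨e.symm (φ u, s (φ u)), ?_⟩, ?_, ?_⟩
    · obtain ⟨v, hv⟩ := hF u
      have : G'.Adj _ _ := hadj u v hv
      exact this.fst_mem
    · intro u v huv
      exact he _ _ (hφ huv)
    · intro u v huv
      exact hadj u v huv
  rw [hcount, edgeCount_blowup]
  have hsum : (labelFactor V A : ℝ) * ∑ s ∈ cliques S, (weight S (pullback e G'.spanningCoe s) : ℝ)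
      = (cliques S).card * edgeCount G'.spanningCoe := by
    exact_mod_cast sum_weight_pullback e hH
  have hle : ∑ s ∈ cliques S, (weight S (pullback e G'.spanningCoe s) : ℝ)
      ≤ (cliques S).card * (K * weight S (⊤ : SimpleGraph V)) := by
    rw [← nsmul_eq_mul, ← Finset.sum_const]
    exact Finset.sum_le_sum fun s _ => h _ (hfree s)
  have hΩ' : (0 : ℝ) < (cliques S).card := by exact_mod_cast hΩ
  have hQ' : (0 : ℝ) ≤ labelFactor V A := Nat.cast_nonneg _
  refine le_of_mul_le_mul_left ?_ hΩ'
  rw [← hsum]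
  push_cast
  calc _ ≤ (labelFactor V A : ℝ) * ((cliques S).card * (K * weight S (⊤ : SimpleGraph V))) :=
        mul_le_mul_of_nonneg_left hle hQ'
    _ = _ := by ring

end Blowup

/-! ### The relative Turán density of `H_k` -/

theorem exists_adj_Hgraph {k : ℕ} (a : Lex (Fin k × Bool)) : ∃ b, (Hgraph k).Adj a b := by
  refine ⟨toLex ((ofLex a).1, !(ofLex a).2), ?_⟩
  rw [Hgraph, SimpleGraph.fromRel_adj]
  constructor
  · intro h
    have h2 : (ofLex a).2 = !(ofLex a).2 := congrArg (fun b => (ofLex b).2) h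
    revert h2
    cases (ofLex a).2 <;> decide
  · cases h : (ofLex a).2
    · exact Or.inl ⟨rfl, rfl, le_rfl⟩
    · exact Or.inr ⟨rfl, rfl, le_rfl⟩

theorem exists_atLevel {d : ℕ} {x y : Cube d} (h : x < y) :
    ∃ i : Fin d, atLevel ((i : ℕ) + 1) x y := by
  obtain ⟨i, hi, hlt⟩ := h
  exact ⟨i, i, rfl, ne_of_lt hlt, hi⟩

theorem atLevel_unique {d : ℕ} {x y : Cube d} {i j : Fin d} (hi : atLevel ((i : ℕ) + 1) x y)
    (hj : atLevel ((j : ℕ) + 1) x y) : i = j := by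
  obtain ⟨i', hi', hi1, hi2⟩ := hi
  obtain ⟨j', hj', hj1, hj2⟩ := hj
  obtain rfl : i' = i := Fin.ext (by omega)
  obtain rfl : j' = j := Fin.ext (by omega)
  rcases lt_trichotomy i' j' with h | h | h
  · exact absurd (hj2 _ h) hi1
  · exact h
  · exact absurd (hi2 _ h) hj1

/-- Weights making every level of the cube equally heavy: pairs of level `ℓ` get weight `2 ^ ℓ`. -/
theorem exists_level_weight (d : ℕ) : ∃ S : Cube d → Cube d → Finset (Fin d → ZMod 2),
    ∀ x y (i : Fin d), atLevel ((i : ℕ) + 1) x y → (S x y).card = 2 ^ ((i : ℕ) + 1) := by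
  have h : ∀ i : Fin d, ∃ T : Finset (Fin d → ZMod 2), T.card = 2 ^ ((i : ℕ) + 1) := by
    intro i
    have hle : 2 ^ ((i : ℕ) + 1) ≤ (Finset.univ : Finset (Fin d → ZMod 2)).card := by
      rw [Finset.card_univ, Fintype.card_fun, ZMod.card, Fintype.card_fin]
      exact Nat.pow_le_pow_right (by norm_num) i.2
    obtain ⟨T, -, hT⟩ := Finset.exists_subset_card_eq hle
    exact ⟨T, hT⟩
  choose T hT using h
  refine ⟨fun x y => if hxy : ∃ i : Fin d, atLevel ((i : ℕ) + 1) x y then T hxy.choose else ∅, ?_⟩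
  intro x y i hi
  have hxy : ∃ i : Fin d, atLevel ((i : ℕ) + 1) x y := ⟨i, hi⟩
  dsimp only
  rw [dif_pos hxy, hT, atLevel_unique hxy.choose_spec hi]

theorem weight_eq_sum_hits {d : ℕ} {S : Cube d → Cube d → Finset (Fin d → ZMod 2)}
    (hS : ∀ x y (i : Fin d), atLevel ((i : ℕ) + 1) x y → (S x y).card = 2 ^ ((i : ℕ) + 1))
    (G : SimpleGraph (Cube d)) : weight S G = ∑ i, (hits G.Adj i).card := by
  have e : weight S G
      = ∑ p ∈ Finset.univ.biUnion fun i => levelPairs G.Adj i, (S p.1 p.2).card := by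
    refine Finset.sum_congr (Finset.ext fun p => ?_) fun _ _ => rfl
    rw [Finset.mem_biUnion, Finset.mem_filter]
    constructor
    · rintro ⟨-, h1, h2⟩
      obtain ⟨i, hi⟩ := exists_atLevel h1
      exact ⟨i, Finset.mem_univ _, Finset.mem_filter.2 ⟨Finset.mem_univ _, h1, h2, hi⟩⟩
    · rintro ⟨i, -, hi⟩
      have := (Finset.mem_filter.1 hi).2
      exact ⟨Finset.mem_univ _, this.1, this.2.1⟩
  rw [e, Finset.sum_biUnion]
  · refine Finset.sum_congr rfl fun i _ => ?_
    rw [card_hits_eq, ← smul_eq_mul, ← Finset.sum_const]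
    exact Finset.sum_congr rfl fun p hp => hS _ _ _ (Finset.mem_filter.1 hp).2.2.2
  · intro i _ j _ hij
    refine Finset.disjoint_left.2 fun p hp hp' => hij ?_
    exact atLevel_unique (Finset.mem_filter.1 hp).2.2.2 (Finset.mem_filter.1 hp').2.2.2

theorem two_mul_card_hits_of_complete {d : ℕ} {G : SimpleGraph (Cube d)}
    (hG : ∀ x y, x < y → G.Adj x y) (i : Fin d) : 4 ^ d ≤ 2 * (hits G.Adj i).card := by
  -- Flipping coordinate `i` of the first component maps the complement of the hits to the hits.
  have h4 : (4 : ℕ) ^ d = (Finset.univ : Finset (Cube d × Cube d)).card := by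
    rw [Finset.card_univ, Fintype.card_prod, card_cube, ← mul_pow]; rfl
  have mem : ∀ p : Cube d × Cube d, ofLex p.1 i = false → p ∈ hits G.Adj i := fun p hp =>
    mem_hits.2 ⟨hp, hG _ _ (lt_splice i p.2 p.1 hp)⟩
  have hle : ((hits G.Adj i)ᶜ).card ≤ (hits G.Adj i).card := by
    have htrue : ∀ p ∈ (hits G.Adj i)ᶜ, ofLex p.1 i = true := by
      intro p hp
      by_contra hne
      exact Finset.mem_compl.1 hp (mem p (Bool.eq_false_of_not_eq_true hne))
    refine Finset.card_le_card_of_injOn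
      (fun p => (toLex fun j => if j = i then false else ofLex p.1 j, p.2)) ?_ ?_
    · intro p _
      exact mem _ (if_pos rfl)
    · intro p hp q hq hpq
      obtain ⟨h1, h2⟩ := Prod.mk.injEq .. ▸ hpq
      refine Prod.ext (Cube.ext_coord fun j => ?_) h2
      by_cases hj : j = i
      · rw [hj, htrue p hp, htrue q hq]
      · have : (if j = i then false else ofLex p.1 j) = if j = i then false else ofLex q.1 j :=
          congrFun (congrArg ofLex h1) j
        rwa [if_neg hj, if_neg hj] at this
  have := Finset.card_add_card_compl (hits G.Adj i)
  rw [h4, ← Finset.card_univ] at *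
  omega

/-- If few coordinates are rich, then the total density is small. -/
theorem sum_card_hits_le {d : ℕ} (r : Cube d → Cube d → Prop) {ε : ℝ} (hε : 0 ≤ ε) :
    ∑ i, ((hits r i).card : ℝ) ≤ (richCount r ε + ε * d) * 4 ^ d := by
  have h1 : ∀ i ∈ (Finset.univ : Finset (Fin d)), ((hits r i).card : ℝ) ≤
      (if ε * 4 ^ d ≤ ((hits r i).card : ℝ) then 4 ^ d else 0) + ε * 4 ^ d := by
    intro i _
    split_ifs with hi
    · have : ((hits r i).card : ℝ) ≤ 4 ^ d := by exact_mod_cast card_hits_le r i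
      have : 0 ≤ ε * 4 ^ d := by positivity
      linarith
    · push Not at hi; linarith
  refine (Finset.sum_le_sum h1).trans (le_of_eq ?_)
  rw [Finset.sum_add_distrib, Finset.sum_const, nsmul_eq_mul, ← Finset.sum_filter,
    Finset.sum_const, nsmul_eq_mul, Finset.card_univ, Fintype.card_fin, ← richCount]
  ring

theorem relTuranDensity_Hgraph_le (k : ℕ) {δ : ℝ} (hδ : 0 < δ) :
    relTuranDensity (Hgraph k) ≤ δ := by
  obtain ⟨C, hC⟩ := exists_containsOrderedCopy k (ε := δ / 4) (by positivity)
  obtain ⟨d₀, hd₀⟩ := exists_nat_ge (4 * C / δ)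
  let d := d₀ + 1
  have hd : 4 * C / δ ≤ (d : ℝ) := hd₀.trans (by exact_mod_cast Nat.le_succ d₀)
  rw [div_le_iff₀ hδ] at hd
  obtain ⟨S, hS⟩ := exists_level_weight d
  have hSne : ∀ x y, x < y → (S x y).Nonempty := by
    intro x y hxy
    obtain ⟨i, hi⟩ := exists_atLevel hxy
    rw [← Finset.card_pos, hS x y i hi]
    positivity
  have htop : (d : ℝ) * 4 ^ d ≤ 2 * weight S (⊤ : SimpleGraph (Cube d)) := by
    rw [weight_eq_sum_hits hS]
    have : ∑ _i : Fin d, 4 ^ d ≤ ∑ i, 2 * (hits (⊤ : SimpleGraph (Cube d)).Adj i).card :=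
      Finset.sum_le_sum fun i _ => two_mul_card_hits_of_complete (fun _ _ h => h.ne) i
    rw [Finset.sum_const, Finset.card_univ, Fintype.card_fin, ← Finset.mul_sum,
      smul_eq_mul] at this
    exact_mod_cast this
  have h4 : (0 : ℝ) < 4 ^ d := by positivity
  have hpos : 0 < weight S (⊤ : SimpleGraph (Cube d)) := by
    have h1 : (0 : ℝ) < (d : ℝ) * 4 ^ d := mul_pos (by exact_mod_cast Nat.succ_pos d₀) h4
    have h2 : (0 : ℝ) < weight S (⊤ : SimpleGraph (Cube d)) := by linarith
    exact_mod_cast h2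
  refine relTuranDensity_le_of_weight exists_adj_Hgraph S hSne hpos hδ.le fun G hG => ?_
  have hrich : (richCount G.Adj (δ / 4) : ℝ) ≤ C := by
    have : richCount G.Adj (δ / 4) < C := lt_of_not_ge fun h => hG (hC d G h)
    exact_mod_cast this.le
  have hsum := sum_card_hits_le G.Adj (ε := δ / 4) (by positivity)
  rw [weight_eq_sum_hits hS G]
  push_cast
  refine hsum.trans ?_
  have h5 : (richCount G.Adj (δ / 4) + δ / 4 * d : ℝ) ≤ δ / 2 * d := by linarith
  calc _ ≤ δ / 2 * d * 4 ^ d := mul_le_mul_of_nonneg_right h5 h4.le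
    _ = δ / 2 * (d * 4 ^ d) := by ring
    _ ≤ δ / 2 * (2 * weight S (⊤ : SimpleGraph (Cube d))) :=
      mul_le_mul_of_nonneg_left htop (by positivity)
    _ = _ := by ring

theorem relTuranDensity_nonneg {α : Type*} [Preorder α] (F : SimpleGraph α) :
    0 ≤ relTuranDensity F := by
  refine Real.sInf_nonneg ?_
  rintro _ ⟨n, G, -, rfl⟩
  refine Real.sSup_nonneg ?_
  rintro _ ⟨G', -, rfl⟩
  positivity

/-- For every `k` and `ε > 0` there is `C` such that every `(ε,C)`-rich
graph on `{0,1}^d` contains an ordered copy of `H_k`; consequently `ρ_<(H_k) = 0`. -/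
theorem rich_contains_Hk_and_rho_Hk_eq_zero (k : ℕ) :
    (∀ ε : ℝ, 0 < ε → ∃ C : ℕ, ∀ (d : ℕ) (G : SimpleGraph (Cube d)),
      IsRichGraph G ε (C : ℝ) → ContainsOrderedCopy (Hgraph k) G) ∧
    relTuranDensity (Hgraph k) = 0 := by
  refine ⟨fun ε hε => ?_, le_antisymm ?_ (relTuranDensity_nonneg _)⟩
  · obtain ⟨C, hC⟩ := exists_containsOrderedCopy k (ε := ε / 2) (by positivity)
    exact ⟨C, fun d G hG => hC d G (le_richCount hG)⟩
  · exact le_of_forall_pos_le_add fun δ hδ => by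
      rw [zero_add]; exact relTuranDensity_Hgraph_le k hδ
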